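/- arXiv:2502.10128 — 2 statements merged into one kernel-verified Lean document; each statement's English description precedes it below -/
import Mathlib

section
/- For all n ≥ 1 and all k ≥ 0, the number of permutations π of length n avoiding the quasi-consecutive pattern 2̲1̲3 with des(π) = k equals the number of set partitions Π of {1,…,n} with blk(Π) = k + 1. -/
open scoped Classical

/-- The number of descents of a permutation of `Fin n` (one-line notation `π 0, π 1, …`). -/
def des {n : ℕ} (π : Equiv.Perm (Fin n)) : ℕ :=
  (Finset.univ.filter fun i : Fin n =>
    ∃ h : (i : ℕ) + 1 < n, π ⟨(i : ℕ) + 1, h⟩ < π i).card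

/-- `π` avoids the quasi-consecutive pattern 2̲1̲3: there are no (0-indexed) positions
`i` and `j` with `i + 2 ≤ j < n` such that `π_{i+1} < π_i < π_j`. -/
def AvoidsP {n : ℕ} (π : Equiv.Perm (Fin n)) : Prop :=
  ¬ ∃ (i j : ℕ) (hj : j < n) (hij : i + 2 ≤ j),
      π ⟨i + 1, by omega⟩ < π ⟨i, by omega⟩ ∧ π ⟨i, by omega⟩ < π ⟨j, hj⟩

/-- Maximum of the tail of `π` starting at the position of the value `x`. -/
noncomputable def tailMax {n : ℕ} (π : Equiv.Perm (Fin n)) (x : Fin n) : Fin n :=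
  (Finset.univ.filter fun y => π.symm x ≤ π.symm y).max' ⟨x, by simp⟩

lemma tailMax_pos {n : ℕ} (π : Equiv.Perm (Fin n)) (x : Fin n) :
    π.symm x ≤ π.symm (tailMax π x) := by
  have := Finset.max'_mem (Finset.univ.filter fun y => π.symm x ≤ π.symm y) ⟨x, by simp⟩
  simpa [tailMax] using this

lemma le_tailMax {n : ℕ} (π : Equiv.Perm (Fin n)) (x y : Fin n) (h : π.symm x ≤ π.symm y) :
    y ≤ tailMax π x :=
  Finset.le_max' _ _ (by simpa using h)

lemma tailMax_eq {n : ℕ} (π : Equiv.Perm (Fin n)) (x z : Fin n)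
    (h1 : π.symm x ≤ π.symm z) (h2 : ∀ y, π.symm x ≤ π.symm y → y ≤ z) : tailMax π x = z :=
  le_antisymm (h2 _ (tailMax_pos π x)) (le_tailMax π x z h1)

lemma tailMax_idem {n : ℕ} (π : Equiv.Perm (Fin n)) (x : Fin n) :
    tailMax π (tailMax π x) = tailMax π x :=
  tailMax_eq π _ _ le_rfl fun y hy => le_tailMax π x y ((tailMax_pos π x).trans hy)

/-- Sorting key: block label decreasing, then value increasing. -/
def sortKey {n : ℕ} (f : Fin n → Fin n) (x : Fin n) : Lex ((Fin n)ᵒᵈ × Fin n) :=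
  toLex (OrderDual.toDual (f x), x)

lemma sortKey_lt {n : ℕ} (f : Fin n → Fin n) (x y : Fin n) :
    sortKey f x < sortKey f y ↔ f y < f x ∨ (f x = f y ∧ x < y) := by
  simp [sortKey, Prod.Lex.lt_iff]

lemma sortKey_injective {n : ℕ} (f : Fin n → Fin n) : Function.Injective (sortKey f) := by
  intro x y h
  have := congrArg (fun z => (ofLex z).2) h
  simpa [sortKey] using this

lemma avoids_asc {n : ℕ} (π : Equiv.Perm (Fin n)) (hπ : AvoidsP π) (i m : ℕ) (hm : m < n)
    (him : i ≤ m) (hmax : ∀ l (hl : l < n), i ≤ l → π ⟨l, hl⟩ ≤ π ⟨m, hm⟩) (j : ℕ) (hij : i ≤ j) :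
    ∀ hj : j ≤ m, π ⟨i, by omega⟩ ≤ π ⟨j, by omega⟩ := by
  induction j, hij using Nat.le_induction with
  | base => intro _; exact le_rfl
  | succ j hij ih =>
    intro hj
    refine (ih (by omega)).trans ?_
    by_contra hlt
    push Not at hlt
    have h1 := hmax j (by omega) hij
    rcases Nat.eq_or_lt_of_le hj with h | h
    · subst h
      exact absurd hlt (not_lt.mpr h1)
    · apply hπ
      refine ⟨j, m, hm, by omega, hlt, lt_of_le_of_ne h1 fun he => ?_⟩
      have := π.injective he
      simp at this
      omega

lemma avoids_strictMono {n : ℕ} (π : Equiv.Perm (Fin n)) (hπ : AvoidsP π) :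
    StrictMono (sortKey (tailMax π) ∘ π) := by
  intro i j hij
  simp only [Function.comp, sortKey_lt]
  have hle : tailMax π (π j) ≤ tailMax π (π i) := by
    apply le_tailMax
    have := tailMax_pos π (π j)
    simp only [Equiv.symm_apply_apply] at this ⊢
    exact hij.le.trans this
  rcases hle.lt_or_eq with h | h
  · exact Or.inl h
  · refine Or.inr ⟨h.symm, ?_⟩
    have hp := tailMax_pos π (π j)
    rw [Equiv.symm_apply_apply, h] at hp
    have hmx : ∀ l (hl : l < n), (i : ℕ) ≤ l →
        π ⟨l, hl⟩ ≤ π ⟨π.symm (tailMax π (π i)), (π.symm (tailMax π (π i))).2⟩ := by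
      intro l hl hil
      simp only [Fin.eta, Equiv.apply_symm_apply]
      apply le_tailMax
      rw [Equiv.symm_apply_apply, Equiv.symm_apply_apply]
      exact hil
    have := avoids_asc π hπ i _ (π.symm (tailMax π (π i))).2
      (hij.le.trans hp) hmx j hij.le hp
    simp only [Fin.eta] at this
    exact lt_of_le_of_ne this fun he => hij.ne (π.injective he)

lemma sorted_tailMax {n : ℕ} (f : Fin n → Fin n) (h1 : ∀ x, x ≤ f x) (h2 : ∀ x, f (f x) = f x)
    (π : Equiv.Perm (Fin n)) (hs : StrictMono (sortKey f ∘ π)) : tailMax π = f := by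
  funext x
  apply tailMax_eq
  · rw [← hs.le_iff_le]
    simp only [Function.comp, Equiv.apply_symm_apply]
    rcases (h1 x).eq_or_lt with h | h
    · rw [← h]
    · exact le_of_lt ((sortKey_lt _ _ _).2 (Or.inr ⟨(h2 x).symm, h⟩))
  · intro y hy
    rw [← hs.le_iff_le] at hy
    simp only [Function.comp, Equiv.apply_symm_apply] at hy
    rw [← not_lt, sortKey_lt] at hy
    push Not at hy
    exact (h1 y).trans hy.1

lemma sorted_avoids {n : ℕ} (f : Fin n → Fin n) (h1 : ∀ x, x ≤ f x) (h2 : ∀ x, f (f x) = f x)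
    (π : Equiv.Perm (Fin n)) (hs : StrictMono (sortKey f ∘ π)) : AvoidsP π := by
  rintro ⟨i, j, hj, hij, hd, hlt⟩
  have hf := sorted_tailMax f h1 h2 π hs
  have hk : sortKey f (π ⟨i, by omega⟩) < sortKey f (π ⟨i + 1, by omega⟩) :=
    hs (show (⟨i, by omega⟩ : Fin n) < ⟨i + 1, by omega⟩ by simp)
  rw [sortKey_lt] at hk
  have hk : f (π ⟨i + 1, by omega⟩) < f (π ⟨i, by omega⟩) := by
    rcases hk with h | h
    · exact h
    · exact absurd h.2 (not_lt.mpr hd.le)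
  have hp := tailMax_pos π (π ⟨i, by omega⟩)
  rw [Equiv.symm_apply_apply] at hp
  rcases hp.eq_or_lt with h | h
  · have h' : tailMax π (π ⟨i, by omega⟩) = π ⟨i, by omega⟩ :=
      (Equiv.symm_apply_eq π).1 h.symm
    have := le_tailMax π (π ⟨i, by omega⟩) (π ⟨j, hj⟩) (by simp; omega)
    rw [h'] at this
    exact absurd hlt (not_lt.mpr this)
  · have := le_tailMax π (π ⟨i + 1, by omega⟩) (tailMax π (π ⟨i, by omega⟩)) (by
      rw [Equiv.symm_apply_apply]; exact Nat.succ_le_of_lt h)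
    rw [hf] at this
    exact absurd hk (not_lt.mpr this)

lemma card_image_tailMax {n : ℕ} (hn : 1 ≤ n) (π : Equiv.Perm (Fin n)) (hπ : AvoidsP π) :
    (Finset.univ.image (tailMax π)).card = des π + 1 := by
  have key : Finset.univ.image (tailMax π) =
      (insert (⟨n - 1, by omega⟩ : Fin n) (Finset.univ.filter fun i : Fin n =>
        ∃ h : (i : ℕ) + 1 < n, π ⟨(i : ℕ) + 1, h⟩ < π i)).image π := by
    ext x
    simp only [Finset.mem_image, Finset.mem_univ, true_and, Finset.mem_insert, Finset.mem_filter]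
    constructor
    · rintro ⟨y, rfl⟩
      refine ⟨π.symm (tailMax π y), ?_, by simp⟩
      by_cases h : (π.symm (tailMax π y) : ℕ) + 1 < n
      · right
        refine ⟨h, ?_⟩
        rw [Equiv.apply_symm_apply]
        have h3 := le_tailMax π y (π ⟨(π.symm (tailMax π y) : ℕ) + 1, h⟩) (by
          rw [Equiv.symm_apply_apply]
          exact (tailMax_pos π y).trans (Fin.le_def.2 (Nat.le_succ _)))
        refine lt_of_le_of_ne h3 fun he => ?_
        have h4 := congrArg (fun z => (π.symm z : ℕ)) he
        simp at h4
      · left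
        apply Fin.ext
        have := (π.symm (tailMax π y)).2
        simp only
        omega
    · rintro ⟨i, hi, rfl⟩
      refine ⟨π i, tailMax_eq π _ _ le_rfl fun y hy => ?_⟩
      obtain ⟨j, rfl⟩ := π.surjective y
      simp only [Equiv.symm_apply_apply] at hy
      rcases hy.eq_or_lt with h | h
      · rw [h]
      · rcases hi with hi | ⟨h', hd⟩
        · exfalso
          have := j.2
          rw [hi, Fin.lt_def] at h
          simp only at h
          omega
        · by_contra hlt
          push Not at hlt
          rcases Nat.eq_or_lt_of_le (Nat.succ_le_of_lt (Fin.lt_def.1 h)) with h5 | h5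
          · have : (⟨(i : ℕ) + 1, h'⟩ : Fin n) = j := Fin.ext h5
            rw [this] at hd
            exact absurd hd (not_lt.mpr hlt.le)
          · exact hπ ⟨i, j, j.2, h5, hd, hlt⟩
  rw [key, Finset.card_image_of_injective _ π.injective, Finset.card_insert_of_notMem]
  · rfl
  · simp only [Finset.mem_filter, Finset.mem_univ, true_and, not_exists]
    intro h
    omega

/-- Inflationary idempotent maps with `k + 1` fixed points: each set partition is encoded by
the map sending an element to the maximum of its block. -/
abbrev BlockMax (n k : ℕ) : Type :=
  {f : Fin n → Fin n // (∀ x, x ≤ f x) ∧ (∀ x, f (f x) = f x) ∧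
    (Finset.univ.image f).card = k + 1}

lemma card_perms (n : ℕ) (hn : 1 ≤ n) (k : ℕ) :
    Nat.card {π : Equiv.Perm (Fin n) // AvoidsP π ∧ des π = k} = Nat.card (BlockMax n k) := by
  refine Nat.card_eq_of_bijective (fun π => (⟨tailMax π.1, fun x => le_tailMax _ _ _ le_rfl,
    tailMax_idem π.1, by rw [card_image_tailMax hn π.1 π.2.1, π.2.2]⟩ : BlockMax n k)) ⟨?_, ?_⟩
  · rintro ⟨π, hπ, h1⟩ ⟨σ, hσ, h2⟩ h
    have h : tailMax π = tailMax σ := congrArg Subtype.val h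
    have m1 := avoids_strictMono π hπ
    have m2 := avoids_strictMono σ hσ
    rw [← h] at m2
    have := (m1.range_inj m2).1 (by
      rw [Set.range_comp, Set.range_comp, π.surjective.range_eq, σ.surjective.range_eq])
    apply Subtype.ext
    apply Equiv.ext
    intro i
    exact sortKey_injective _ (congrFun this i)
  · rintro ⟨f, h1, h2, h3⟩
    have hs : StrictMono (sortKey f ∘ Tuple.sort (sortKey f)) :=
      (Tuple.monotone_sort (sortKey f)).strictMono_of_injective
        ((sortKey_injective f).comp (Tuple.sort (sortKey f)).injective)
    have hav := sorted_avoids f h1 h2 _ hs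
    have hf := sorted_tailMax f h1 h2 _ hs
    refine ⟨⟨Tuple.sort (sortKey f), hav, ?_⟩, Subtype.ext hf⟩
    have := card_image_tailMax hn _ hav
    rw [hf, h3] at this
    omega

/-- Maximum of the block of `x`. -/
noncomputable def partMax {n : ℕ} (P : Finpartition (Finset.univ : Finset (Fin n)))
    (x : Fin n) : Fin n :=
  (P.part x).max' (by simp)

lemma partMax_mem {n : ℕ} (P : Finpartition (Finset.univ : Finset (Fin n))) (x : Fin n) :
    partMax P x ∈ P.part x := Finset.max'_mem _ _

lemma part_partMax {n : ℕ} (P : Finpartition (Finset.univ : Finset (Fin n))) (x : Fin n) :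
    P.part (partMax P x) = P.part x :=
  P.part_eq_of_mem (P.part_mem.2 (Finset.mem_univ x)) (partMax_mem P x)

lemma partMax_eq_iff {n : ℕ} (P : Finpartition (Finset.univ : Finset (Fin n))) (x y : Fin n) :
    partMax P x = partMax P y ↔ P.part x = P.part y := by
  constructor
  · intro h
    rw [← part_partMax P x, h, part_partMax]
  · intro h
    simp only [partMax, h]

lemma parts_eq_image {n : ℕ} (P : Finpartition (Finset.univ : Finset (Fin n))) :
    P.parts = Finset.univ.image P.part := by
  ext t
  simp only [Finset.mem_image, Finset.mem_univ, true_and]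
  constructor
  · intro ht
    obtain ⟨x, -, hx⟩ := P.part_surjOn ht
    exact ⟨x, hx⟩
  · rintro ⟨x, rfl⟩
    exact P.part_mem.2 (Finset.mem_univ x)

lemma card_image_partMax {n : ℕ} (P : Finpartition (Finset.univ : Finset (Fin n))) :
    (Finset.univ.image (partMax P)).card = P.parts.card := by
  have : P.parts = (Finset.univ.image (partMax P)).image P.part := by
    rw [Finset.image_image, parts_eq_image]
    congr 1
    funext x
    exact (part_partMax P x).symm
  rw [this]
  symm
  apply Finset.card_image_of_injOn
  intro a ha b hb hab
  simp only [Finset.coe_image, Finset.coe_univ, Set.image_univ, Set.mem_range] at ha hb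
  obtain ⟨x, rfl⟩ := ha
  obtain ⟨y, rfl⟩ := hb
  rw [part_partMax, part_partMax] at hab
  exact (partMax_eq_iff P x y).2 hab

lemma card_partitions (n k : ℕ) :
    Nat.card {P : Finpartition (Finset.univ : Finset (Fin n)) // P.parts.card = k + 1} =
      Nat.card (BlockMax n k) := by
  refine Nat.card_eq_of_bijective (fun P => (⟨partMax P.1,
    fun x => Finset.le_max' _ _ (by simp),
    fun x => (partMax_eq_iff _ _ _).2 (part_partMax _ _),
    by rw [card_image_partMax, P.2]⟩ : BlockMax n k)) ⟨?_, ?_⟩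
  · rintro ⟨P, hP⟩ ⟨Q, hQ⟩ h
    have h : partMax P = partMax Q := congrArg Subtype.val h
    have hpart : P.part = Q.part := by
      funext x
      ext y
      rw [P.mem_part_iff_part_eq_part (Finset.mem_univ _) (Finset.mem_univ _),
        Q.mem_part_iff_part_eq_part (Finset.mem_univ _) (Finset.mem_univ _),
        ← partMax_eq_iff, ← partMax_eq_iff, h]
    apply Subtype.ext
    apply Finpartition.ext
    show P.parts = Q.parts
    rw [parts_eq_image, parts_eq_image, hpart]
  · rintro ⟨f, h1, h2, h3⟩
    let P : Finpartition (Finset.univ : Finset (Fin n)) :=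
      Finpartition.ofSetSetoid (Setoid.ker f) Finset.univ
    have hmem : ∀ x y, y ∈ P.part x ↔ f x = f y := by
      intro x y
      have : P.part x = Finset.univ.filter fun b => f x = f b := by
        apply P.part_eq_of_mem
        · exact Finset.mem_image.2 ⟨x, Finset.mem_univ _, by ext b; simp⟩
        · simp
      rw [this]
      simp
    have hf : partMax P = f := by
      funext x
      apply le_antisymm
      · apply Finset.max'_le
        intro y hy
        rw [(hmem x y).1 hy]
        exact h1 y
      · exact Finset.le_max' _ _ ((hmem _ _).2 (h2 x).symm)
    exact ⟨⟨P, by rw [← card_image_partMax, hf, h3]⟩, Subtype.ext hf⟩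

/-- For all `n ≥ 1` and `k ≥ 0`, the number of permutations of length `n` avoiding the
quasi-consecutive pattern 2̲1̲3 with `des(π) = k` equals the number of set partitions `Π`
of `{1,…,n}` with `blk(Π) = k + 1`. -/
theorem statement10 (n : ℕ) (hn : 1 ≤ n) (k : ℕ) :
    Nat.card {π : Equiv.Perm (Fin n) // AvoidsP π ∧ des π = k} =
      Nat.card {P : Finpartition (Finset.univ : Finset (Fin n)) //
        P.parts.card = k + 1} := by
  rw [card_perms n hn k, card_partitions]
end

section
/- The quasi-consecutive patterns 2̲3̲1̲4 and 2̲4̲1̲3 are des-Wilf-equivalent: for all n ≥ 1 and k ≥ 0, the number of permutations of length n avoiding 2̲3̲1̲4 with exactly k descents equals the number of permutations of length n avoiding 2̲4̲1̲3 with exactly k descents. -/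
open scoped Classical

/-- `π` avoids the quasi-consecutive pattern 2̲3̲1̲4: there are no (0-indexed) positions
`i` and `j` with `i + 3 ≤ j < n` such that π_{i+2} < π_i < π_{i+1} < π_j. -/
def AvoidsA {n : ℕ} (π : Equiv.Perm (Fin n)) : Prop :=
  ¬ ∃ (i j : ℕ) (hj : j < n) (hij : i + 3 ≤ j), π ⟨i + 2, by omega⟩ < π ⟨i, by omega⟩ ∧ π ⟨i, by omega⟩ < π ⟨i + 1, by omega⟩ ∧ π ⟨i + 1, by omega⟩ < π ⟨j, hj⟩

/-- `π` avoids the quasi-consecutive pattern 2̲4̲1̲3: there are no (0-indexed) positions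
`i` and `j` with `i + 3 ≤ j < n` such that π_{i+2} < π_i < π_j < π_{i+1}. -/
def AvoidsB {n : ℕ} (π : Equiv.Perm (Fin n)) : Prop :=
  ¬ ∃ (i j : ℕ) (hj : j < n) (hij : i + 3 ≤ j), π ⟨i + 2, by omega⟩ < π ⟨i, by omega⟩ ∧ π ⟨i, by omega⟩ < π ⟨j, hj⟩ ∧ π ⟨j, hj⟩ < π ⟨i + 1, by omega⟩

/-- The one-line notation of `π`, extended by zero to all naturals. -/
noncomputable def ext0 {n : ℕ} (π : Equiv.Perm (Fin n)) (i : ℕ) : ℕ :=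
  if h : i < n then (π ⟨i, h⟩ : ℕ) else 0

/-- The Lehmer code of a word of length `n`. -/
noncomputable def lcode (n : ℕ) (p : ℕ → ℕ) (i : ℕ) : ℕ :=
  ((Finset.Ioo i n).filter fun j => p j < p i).card

/-- Number of descents of a word of length `n`. -/
noncomputable def desW (n : ℕ) (c : ℕ → ℕ) : ℕ :=
  ((Finset.range n).filter fun i => i + 1 < n ∧ c (i + 1) < c i).card

/-- The triple condition at the middle position `i`. -/
def QQ (n : ℕ) (c : ℕ → ℕ) (i : ℕ) : Prop :=
  1 ≤ i ∧ i + 1 < n ∧ c (i + 1) < c (i - 1) ∧ c (i - 1) ≤ c i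

def CodeS (n : ℕ) (c : ℕ → ℕ) : Prop :=
  (∀ i < n, c i < n - i) ∧ ∀ i, n ≤ i → c i = 0

def CodeA (n : ℕ) (c : ℕ → ℕ) : Prop := ∀ i, QQ n c i → c i = n - 1 - i

def CodeB (n : ℕ) (c : ℕ → ℕ) : Prop := ∀ i, QQ n c i → c i = c (i - 1)

noncomputable def phi (n : ℕ) (c : ℕ → ℕ) (i : ℕ) : ℕ := if QQ n c i then c (i - 1) else c i

noncomputable def psi (n : ℕ) (c : ℕ → ℕ) (i : ℕ) : ℕ := if QQ n c i then n - 1 - i else c i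

lemma QQ_phi (n : ℕ) (c : ℕ → ℕ) (i : ℕ) : QQ n (phi n c) i ↔ QQ n c i := by
  rcases i with _ | i
  · simp [QQ]
  · simp only [QQ, phi]
    grind

lemma QQ_psi (n : ℕ) (c : ℕ → ℕ) (hc : CodeS n c) (i : ℕ) : QQ n (psi n c) i ↔ QQ n c i := by
  rcases i with _ | i
  · simp [QQ]
  · have h0 := hc.1 i
    have h1 := hc.1 (i + 1)
    have h2 := hc.1 (i + 1 + 1)
    simp only [QQ, psi]
    grind

lemma phi_CodeS (n : ℕ) (c : ℕ → ℕ) (hc : CodeS n c) : CodeS n (phi n c) := by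
  refine ⟨fun i hi => ?_, fun i hi => ?_⟩
  · have h1 := hc.1 i hi
    simp only [QQ, phi]
    grind
  · have h1 := hc.2 i hi
    simp only [QQ, phi]
    grind

lemma psi_CodeS (n : ℕ) (c : ℕ → ℕ) (hc : CodeS n c) : CodeS n (psi n c) := by
  refine ⟨fun i hi => ?_, fun i hi => ?_⟩
  · have h1 := hc.1 i hi
    simp only [QQ, psi]
    grind
  · have h1 := hc.2 i hi
    simp only [QQ, psi]
    grind

lemma phi_CodeB (n : ℕ) (c : ℕ → ℕ) : CodeB n (phi n c) := by
  intro i hi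
  rw [QQ_phi] at hi
  have : ¬ QQ n c (i - 1) := by
    unfold QQ at *
    grind
  simp [phi, hi, this]

lemma psi_CodeA (n : ℕ) (c : ℕ → ℕ) (hc : CodeS n c) : CodeA n (psi n c) := by
  intro i hi
  rw [QQ_psi n c hc] at hi
  simp [psi, hi]

lemma psi_phi (n : ℕ) (c : ℕ → ℕ) (hA : CodeA n c) : psi n (phi n c) = c := by
  funext i
  by_cases h : QQ n c i
  · rw [psi, if_pos ((QQ_phi n c i).2 h), hA i h]
  · rw [psi, if_neg (fun h' => h ((QQ_phi n c i).1 h')), phi, if_neg h]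

lemma phi_psi (n : ℕ) (c : ℕ → ℕ) (hc : CodeS n c) (hB : CodeB n c) : phi n (psi n c) = c := by
  funext i
  by_cases h : QQ n c i
  · have h' : ¬ QQ n c (i - 1) := by
      unfold QQ at *
      grind
    rw [phi, if_pos ((QQ_psi n c hc i).2 h), hB i h, psi, if_neg h']
  · rw [phi, if_neg (fun h' => h ((QQ_psi n c hc i).1 h')), psi, if_neg h]

lemma des_phi (n : ℕ) (c : ℕ → ℕ) : desW n (phi n c) = desW n c := by
  unfold desW
  congr 1
  apply Finset.filter_congr
  intro i _
  simp only [QQ, phi]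
  grind

lemma code_card (n k : ℕ) :
    {c : ℕ → ℕ | CodeS n c ∧ CodeA n c ∧ desW n c = k}.ncard =
      {c : ℕ → ℕ | CodeS n c ∧ CodeB n c ∧ desW n c = k}.ncard := by
  refine Set.ncard_congr (fun c _ => phi n c) ?_ ?_ ?_
  · rintro c ⟨h1, h2, h3⟩
    exact ⟨phi_CodeS n c h1, phi_CodeB n c, by rw [des_phi, h3]⟩
  · rintro c d ⟨_, h2, _⟩ ⟨_, h5, _⟩ h
    rw [← psi_phi n c h2, ← psi_phi n d h5, h]
  · rintro c ⟨h1, h2, h3⟩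
    refine ⟨psi n c, ⟨psi_CodeS n c h1, psi_CodeA n c h1, ?_⟩, phi_psi n c h1 h2⟩
    rw [← des_phi, phi_psi n c h1 h2, h3]

lemma ext0_inj {n : ℕ} (π : Equiv.Perm (Fin n)) {i j : ℕ} (hi : i < n) (hj : j < n)
    (h : ext0 π i = ext0 π j) : i = j := by
  simp only [ext0, hi, hj, dif_pos] at h
  have := π.injective (Fin.ext h)
  simpa using this

lemma lcode_CodeS (n : ℕ) (p : ℕ → ℕ) : CodeS n (lcode n p) := by
  refine ⟨fun i hi => ?_, fun i hi => ?_⟩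
  · have := Finset.card_filter_le (Finset.Ioo i n) (fun j => p j < p i)
    simp only [Nat.card_Ioo] at this
    simp only [lcode]
    omega
  · simp [lcode, Finset.Ioo_eq_empty_of_le hi]

lemma lcode_lt (n : ℕ) (p : ℕ → ℕ) (i j : ℕ) (hij : i < j) (hj : j < n) (h : p j < p i) :
    lcode n p j < lcode n p i := by
  apply Finset.card_lt_card
  refine (Finset.ssubset_iff_of_subset ?_).2 ⟨j, ?_, ?_⟩
  · intro x
    simp only [Finset.mem_filter, Finset.mem_Ioo]
    omega
  · simp only [Finset.mem_filter, Finset.mem_Ioo]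
    omega
  · simp

/-- If `p i ≤ p l` for all `l ∈ (i, j]`, then the code at `i` is at most that at `j`. -/
lemma lcode_le (n : ℕ) (p : ℕ → ℕ) (i j : ℕ)
    (h : ∀ l, i < l → l ≤ j → p i ≤ p l) (hj : p i ≤ p j) :
    lcode n p i ≤ lcode n p j := by
  apply Finset.card_le_card
  intro x
  simp only [Finset.mem_filter, Finset.mem_Ioo]
  intro hx
  have := h x
  omega

lemma lcode_des (n : ℕ) (p : ℕ → ℕ) (i : ℕ) (hi : i + 1 < n) :
    lcode n p (i + 1) < lcode n p i ↔ p (i + 1) < p i := by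
  constructor
  · intro h
    by_contra hh
    have := lcode_le n p i (i + 1) (fun l h1 h2 => by
      obtain rfl : l = i + 1 := by omega
      omega) (by omega)
    omega
  · exact lcode_lt n p i (i + 1) (by omega) hi

lemma QQ_lcode (n : ℕ) (p : ℕ → ℕ) (i : ℕ) (hi : i + 2 < n)
    (hp : ∀ a < n, ∀ b < n, p a = p b → a = b) :
    QQ n (lcode n p) (i + 1) ↔ p (i + 2) < p i ∧ p i < p (i + 1) := by
  have hd := lcode_des n p i (by omega)
  have hne : p i ≠ p (i + 1) := fun h => by have := hp i (by omega) (i + 1) (by omega) h; omega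
  simp only [QQ, Nat.add_sub_cancel]
  constructor
  · rintro ⟨_, _, h1, h2⟩
    have h3 : p i < p (i + 1) := by omega
    refine ⟨?_, h3⟩
    by_contra hh
    have := lcode_le n p i (i + 2) (fun l h1 h2 => by
      obtain rfl | rfl : l = i + 1 ∨ l = i + 2 := by omega
      all_goals omega) (by omega)
    simp only [show i + 1 + 1 = i + 2 from rfl] at h1
    omega
  · rintro ⟨h1, h2⟩
    have := lcode_lt n p i (i + 2) (by omega) hi h1
    refine ⟨by omega, by omega, this, by omega⟩

lemma A_step (n : ℕ) (p : ℕ → ℕ) (i : ℕ) (hi : i + 2 < n)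
    (hp : ∀ a < n, ∀ b < n, p a = p b → a = b)
    (h1 : p (i + 2) < p i) (h2 : p i < p (i + 1)) :
    lcode n p (i + 1) = n - 1 - (i + 1) ↔ ¬ ∃ j, j < n ∧ i + 3 ≤ j ∧ p (i + 1) < p j := by
  have e : n - 1 - (i + 1) = (Finset.Ioo (i + 1) n).card := by simp; omega
  rw [e, lcode, Finset.card_filter_eq_iff]
  simp only [Finset.mem_Ioo]
  constructor
  · rintro h ⟨j, a, b, c⟩
    have := h (x := j) (by omega)
    omega
  · intro h j hj
    by_contra hh
    have := hp (i + 1) (by omega) j (by omega)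
    apply h
    refine ⟨j, by omega, ?_, by omega⟩
    rcases Nat.lt_or_ge j (i + 3) with h' | h'
    · obtain rfl : j = i + 2 := by omega
      omega
    · exact h'

lemma B_step (n : ℕ) (p : ℕ → ℕ) (i : ℕ) (hi : i + 2 < n)
    (hp : ∀ a < n, ∀ b < n, p a = p b → a = b)
    (h1 : p (i + 2) < p i) (h2 : p i < p (i + 1)) :
    lcode n p (i + 1) = lcode n p i ↔
      ¬ ∃ j, j < n ∧ i + 3 ≤ j ∧ p i < p j ∧ p j < p (i + 1) := by
  have hsub : (Finset.Ioo i n).filter (fun j => p j < p i) ⊆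
      (Finset.Ioo (i + 1) n).filter (fun j => p j < p (i + 1)) := by
    intro x
    simp only [Finset.mem_filter, Finset.mem_Ioo]
    intro hx
    have : x ≠ i + 1 := by rintro rfl; omega
    omega
  constructor
  · rintro h ⟨j, a, b, c, d⟩
    have he := Finset.eq_of_subset_of_card_le hsub (le_of_eq h)
    have : j ∈ (Finset.Ioo i n).filter (fun j => p j < p i) := by
      rw [he]
      simp only [Finset.mem_filter, Finset.mem_Ioo]
      omega
    simp only [Finset.mem_filter, Finset.mem_Ioo] at this
    omega
  · intro h
    apply le_antisymm
    · apply Finset.card_le_card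
      intro x
      simp only [Finset.mem_filter, Finset.mem_Ioo]
      intro hx
      refine ⟨by omega, ?_⟩
      by_contra hh
      have := hp i (by omega) x (by omega)
      apply h
      refine ⟨x, by omega, ?_, by omega, by omega⟩
      rcases Nat.lt_or_ge x (i + 3) with h' | h'
      · obtain rfl : x = i + 2 := by omega
        omega
      · exact h'
    · exact Finset.card_le_card hsub

lemma avoidsA_iff {n : ℕ} (π : Equiv.Perm (Fin n)) :
    AvoidsA π ↔ CodeA n (lcode n (ext0 π)) := by
  have hp : ∀ a < n, ∀ b < n, ext0 π a = ext0 π b → a = b := fun a ha b hb => ext0_inj π ha hb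
  have e : ∀ i (h : i < n), ((π ⟨i, h⟩ : Fin n) : ℕ) = ext0 π i := fun i h => by simp [ext0, h]
  simp only [AvoidsA, Fin.lt_def, e]
  constructor
  · intro h i hQ
    obtain ⟨i, rfl⟩ : ∃ i', i = i' + 1 := ⟨i - 1, by have := hQ.1; omega⟩
    have hi : i + 2 < n := hQ.2.1
    obtain ⟨h1, h2⟩ := (QQ_lcode n _ i hi hp).1 hQ
    rw [A_step n _ i hi hp h1 h2]
    rintro ⟨j, a, b, c⟩
    exact h ⟨i, j, a, b, h1, h2, c⟩
  · rintro h ⟨i, j, a, b, h1, h2, c⟩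
    have hi : i + 2 < n := by omega
    exact (A_step n _ i hi hp h1 h2).1 (h _ ((QQ_lcode n _ i hi hp).2 ⟨h1, h2⟩)) ⟨j, a, b, c⟩

lemma avoidsB_iff {n : ℕ} (π : Equiv.Perm (Fin n)) :
    AvoidsB π ↔ CodeB n (lcode n (ext0 π)) := by
  have hp : ∀ a < n, ∀ b < n, ext0 π a = ext0 π b → a = b := fun a ha b hb => ext0_inj π ha hb
  have e : ∀ i (h : i < n), ((π ⟨i, h⟩ : Fin n) : ℕ) = ext0 π i := fun i h => by simp [ext0, h]
  simp only [AvoidsB, Fin.lt_def, e]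
  constructor
  · intro h i hQ
    obtain ⟨i, rfl⟩ : ∃ i', i = i' + 1 := ⟨i - 1, by have := hQ.1; omega⟩
    have hi : i + 2 < n := hQ.2.1
    obtain ⟨h1, h2⟩ := (QQ_lcode n _ i hi hp).1 hQ
    rw [Nat.add_sub_cancel, B_step n _ i hi hp h1 h2]
    rintro ⟨j, a, b, c⟩
    exact h ⟨i, j, a, b, h1, c⟩
  · rintro h ⟨i, j, a, b, h1, h2, c⟩
    have hi : i + 2 < n := by omega
    exact (B_step n _ i hi hp h1 (by omega)).1
      (h _ ((QQ_lcode n _ i hi hp).2 ⟨h1, by omega⟩)) ⟨j, a, b, h2, c⟩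

lemma des_eq {n : ℕ} (π : Equiv.Perm (Fin n)) : des π = desW n (lcode n (ext0 π)) := by
  unfold des desW
  refine Finset.card_bij (fun i _ => (i : ℕ)) ?_ ?_ ?_
  · intro i hi
    simp only [Finset.mem_filter, Finset.mem_univ, true_and] at hi
    obtain ⟨h, h'⟩ := hi
    simp only [Finset.mem_filter, Finset.mem_range]
    refine ⟨i.2, h, ?_⟩
    rw [lcode_des n _ _ h]
    simpa [ext0, h] using h'
  · intro a _ b _ h
    exact Fin.ext h
  · intro b hb
    simp only [Finset.mem_filter, Finset.mem_range] at hb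
    obtain ⟨h0, h, h'⟩ := hb
    rw [lcode_des n _ _ h] at h'
    refine ⟨⟨b, h0⟩, ?_, rfl⟩
    simp only [Finset.mem_filter, Finset.mem_univ, true_and]
    exact ⟨h, by simpa [ext0, h, h0] using h'⟩

lemma ext0_surj {n : ℕ} (π : Equiv.Perm (Fin n)) (v : ℕ) (hv : v < n) :
    ∃ j, j < n ∧ ext0 π j = v :=
  ⟨π.symm ⟨v, hv⟩, (π.symm ⟨v, hv⟩).2, by simp [ext0]⟩

lemma lcode_aux {n : ℕ} (π σ : Equiv.Perm (Fin n)) (i : ℕ) (hi : i < n)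
    (hpre : ∀ j < i, ext0 π j = ext0 σ j) (hlt : ext0 π i < ext0 σ i) :
    lcode n (ext0 π) i < lcode n (ext0 σ) i := by
  have key : ∀ ρ : Equiv.Perm (Fin n), lcode n (ext0 ρ) i =
      ((Finset.range n).filter fun v => v < ext0 ρ i ∧ ∀ j < i, ext0 ρ j ≠ v).card := by
    intro ρ
    refine Finset.card_bij (fun j _ => ext0 ρ j) ?_ ?_ ?_
    · intro j hj
      simp only [Finset.mem_filter, Finset.mem_Ioo] at hj
      simp only [Finset.mem_filter, Finset.mem_range]
      refine ⟨by simp [ext0, hj.1.2], hj.2, fun l hl h => ?_⟩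
      have := ext0_inj ρ (by omega) hj.1.2 h
      omega
    · intro a ha b hb h
      simp only [Finset.mem_filter, Finset.mem_Ioo] at ha hb
      exact ext0_inj ρ ha.1.2 hb.1.2 h
    · intro v hv
      simp only [Finset.mem_filter, Finset.mem_range] at hv
      obtain ⟨j, hj, rfl⟩ := ext0_surj ρ v hv.1
      refine ⟨j, ?_, rfl⟩
      simp only [Finset.mem_filter, Finset.mem_Ioo]
      refine ⟨⟨?_, hj⟩, hv.2.1⟩
      by_contra hh
      rcases Nat.lt_or_ge j i with h | h
      · exact hv.2.2 j h rfl
      · obtain rfl : j = i := by omega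
        omega
  rw [key, key]
  apply Finset.card_lt_card
  refine (Finset.ssubset_iff_of_subset ?_).2 ⟨ext0 π i, ?_, ?_⟩
  · intro v
    simp only [Finset.mem_filter, Finset.mem_range]
    rintro ⟨h1, h2, h3⟩
    exact ⟨h1, by omega, fun j hj => by rw [← hpre j hj]; exact h3 j hj⟩
  · simp only [Finset.mem_filter, Finset.mem_range]
    refine ⟨by simp [ext0, hi], hlt, fun j hj h => ?_⟩
    rw [← hpre j hj] at h
    have := ext0_inj π (by omega) hi h
    omega
  · simp

lemma lcode_inj {n : ℕ} : Function.Injective fun π : Equiv.Perm (Fin n) => lcode n (ext0 π) := by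
  intro π σ h
  have h : lcode n (ext0 π) = lcode n (ext0 σ) := h
  have key : ∀ i, i < n → ext0 π i = ext0 σ i := by
    intro i
    induction i using Nat.strong_induction_on with
    | _ i ih =>
      intro hi
      rcases lt_trichotomy (ext0 π i) (ext0 σ i) with h1 | h1 | h1
      · have := lcode_aux π σ i hi (fun j hj => ih j hj (by omega)) h1
        rw [h] at this
        omega
      · exact h1
      · have := lcode_aux σ π i hi (fun j hj => (ih j hj (by omega)).symm) h1
        rw [h] at this
        omega
  ext i
  have := key i i.2
  simpa [ext0] using this

lemma lcode_surj {n : ℕ} (c : ℕ → ℕ) (hc : CodeS n c) :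
    ∃ π : Equiv.Perm (Fin n), lcode n (ext0 π) = c := by
  let F : Equiv.Perm (Fin n) → ((i : Fin n) → Fin (n - i)) :=
    fun π i => ⟨lcode n (ext0 π) i, (lcode_CodeS n (ext0 π)).1 i i.2⟩
  have hext : ∀ a b : ℕ → ℕ, CodeS n a → CodeS n b → (∀ i < n, a i = b i) → a = b := by
    intro a b ha hb h
    funext i
    rcases Nat.lt_or_ge i n with h' | h'
    · exact h i h'
    · rw [ha.2 i h', hb.2 i h']
  have hF : Function.Bijective F := by
    rw [Fintype.bijective_iff_injective_and_card]
    constructor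
    · intro π σ h
      apply lcode_inj
      apply hext _ _ (lcode_CodeS n _) (lcode_CodeS n _)
      intro i hi
      have := congrFun h ⟨i, hi⟩
      simpa [F] using this
    · rw [Fintype.card_perm, Fintype.card_fin, Fintype.card_pi]
      simp only [Fintype.card_fin]
      rw [Fin.prod_univ_eq_prod_range (fun i => n - i) n, ← Nat.descFactorial_eq_prod_range,
        Nat.descFactorial_self]
  obtain ⟨π, hπ⟩ := hF.2 fun i => ⟨c i, hc.1 i i.2⟩
  refine ⟨π, hext _ _ (lcode_CodeS n _) hc fun i hi => ?_⟩
  have := congrFun hπ ⟨i, hi⟩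
  simpa [F] using this

lemma perm_card {n : ℕ} (P : Equiv.Perm (Fin n) → Prop) (R : (ℕ → ℕ) → Prop)
    (h : ∀ π, P π ↔ R (lcode n (ext0 π))) :
    Nat.card {π : Equiv.Perm (Fin n) // P π} = {c : ℕ → ℕ | CodeS n c ∧ R c}.ncard := by
  have e : {c : ℕ → ℕ | CodeS n c ∧ R c} =
      Set.image (fun π : Equiv.Perm (Fin n) => lcode n (ext0 π)) {π | P π} := by
    ext c
    constructor
    · rintro ⟨h1, h2⟩
      obtain ⟨π, rfl⟩ := lcode_surj c h1
      exact ⟨π, (h π).2 h2, rfl⟩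
    · rintro ⟨π, h1, rfl⟩
      exact ⟨lcode_CodeS n _, (h π).1 h1⟩
  rw [e, Set.ncard_image_of_injective _ lcode_inj]
  rfl

/-- The quasi-consecutive patterns 2̲3̲1̲4 and 2̲4̲1̲3 are des-Wilf-equivalent. -/
theorem statement14 (n : ℕ) (hn : 1 ≤ n) (k : ℕ) :
    Nat.card {π : Equiv.Perm (Fin n) // AvoidsA π ∧ des π = k} =
      Nat.card {π : Equiv.Perm (Fin n) // AvoidsB π ∧ des π = k} := by
  rw [perm_card (fun π => AvoidsA π ∧ des π = k) (fun c => CodeA n c ∧ desW n c = k)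
      (fun π => by rw [avoidsA_iff, des_eq]),
    perm_card (fun π => AvoidsB π ∧ des π = k) (fun c => CodeB n c ∧ desW n c = k)
      (fun π => by rw [avoidsB_iff, des_eq])]
  exact code_card n k
end
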